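/- Let G be a finite abelian group having an internal direct sum decomposition G = G₁ ⊕ H where G₁ is cyclic of order 3m+2 with m ≥ 1 an integer, and suppose |H| is odd. Then N₃(G) ≥ ((2m+1)/(6m+4))·|G| − 1/2. -/

import Mathlib

open Pointwise

/-- `itSum k A` is the `k`-fold sumset `kA = {a₁ + ⋯ + a_k : aᵢ ∈ A}`. -/
def itSum {G : Type*} [AddCommGroup G] : ℕ → Set G → Set G
  | 0, _ => {0}
  | (k + 1), A => itSum k A + A

/-- `Nk G k` is the largest size of an aperiodic subset `A ⊆ G` with `kA ≠ G` which is
maximal with this property; `0` if no such subset exists. -/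
noncomputable def Nk (G : Type*) [AddCommGroup G] (k : ℕ) : ℕ :=
  sSup {m : ℕ | ∃ A : Set G,
    {g : G | g +ᵥ A = A} = {0} ∧
    itSum k A ≠ Set.univ ∧
    (∀ g ∉ A, itSum k (A ∪ {g}) = Set.univ) ∧
    m = A.ncard}

/-!
If some `A` has `kA = G ∖ {c}`, then every `B ⊇ A` maximal with `c ∉ kB` again satisfies
`kB = G ∖ {c}`; such a `B` is aperiodic, since a period of `B` is a period of `kB`. Hence
`|A| ≤ N_k(G)`, and it suffices to find a large `A` in `ℤ/(3m+2) × H` whose threefold sumset misses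
exactly one point. Choose `P ⊆ H` containing exactly one of `x`, `-x` for each `x ≠ 0`, so that
`|P| = (|H| - 1)/2` and `0 ∉ P + P`. The set whose fibres over `0, …, m - 2` are `H`, and whose
fibres over `m - 1`, `m`, `m + 1` are `H ∖ {0}`, `P`, `{0}`, has a threefold sumset missing exactly
`(-1, 0)`. This breaks down only if `H` is trivial, where an interval does the job, or if `m = 1`
and `|H| = 3`, where a set of four elements does.
-/

section Sumsets

variable {G K : Type*} [AddCommGroup G] [AddCommGroup K] {A B : Set G} {k : ℕ}

theorem itSum_mono (k : ℕ) (h : A ⊆ B) : itSum k A ⊆ itSum k B := by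
  induction k with
  | zero => exact subset_rfl
  | succ k ih => exact Set.add_subset_add ih h

theorem itSum_image {F : Type*} [FunLike F G K] [AddMonoidHomClass F G K] (f : F) (k : ℕ)
    (A : Set G) : itSum k (f '' A) = f '' itSum k A := by
  induction k with
  | zero => simp [itSum]
  | succ k ih => simp only [itSum, ih, Set.image_add]

theorem vadd_itSum_of_vadd_eq {g : G} (hk : k ≠ 0) (h : g +ᵥ A = A) :
    g +ᵥ itSum k A = itSum k A := by
  obtain ⟨k, rfl⟩ := Nat.exists_eq_succ_of_ne_zero hk
  rw [itSum, ← add_vadd_comm, h]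

theorem mem_itSum_three {x : G} :
    x ∈ itSum 3 A ↔ ∃ a ∈ A, ∃ b ∈ A, ∃ c ∈ A, a + b + c = x := by
  simp [itSum, Set.mem_add]

theorem itSum_Icc_zero (k : ℕ) {m : ℤ} (hm : 0 ≤ m) :
    itSum k (Set.Icc 0 m) = Set.Icc 0 (k * m) := by
  induction k with
  | zero => simp [itSum]
  | succ k ih =>
    rw [itSum, ih, Set.Icc_add_Icc (by positivity) hm]
    push_cast
    ring_nf

theorem compl_zero_add_of_nontrivial (hA : A.Nontrivial) : ({0}ᶜ : Set G) + A = Set.univ := by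
  refine Set.eq_univ_of_forall fun x => ?_
  obtain ⟨a, ha, hax⟩ := hA.exists_ne x
  exact ⟨x - a, sub_ne_zero.2 hax.symm, a, ha, sub_add_cancel x a⟩

theorem nontrivial_compl_zero_of_zero_notMem_add_self (hA : 0 ∉ A + A) (hne : A.Nonempty) :
    ({0}ᶜ : Set G).Nontrivial := by
  obtain ⟨p, hp⟩ := hne
  have hpp : p + p ≠ 0 := fun h => hA ⟨p, hp, p, hp, h⟩
  have hp0 : p ≠ 0 := by rintro rfl; exact hpp (add_zero 0)
  exact ⟨p, hp0, -p, neg_ne_zero.2 hp0, fun h => hpp (eq_neg_iff_add_eq_zero.1 h)⟩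

end Sumsets

section Nk

variable {G K : Type*} [AddCommGroup G] [AddCommGroup K] {A : Set G} {k : ℕ}

/-- The aperiodic subsets `A` that are maximal subject to `kA ≠ G`, that is, those whose sizes are
compared in the definition of `Nk`. -/
structure IsAperiodicMaximal (k : ℕ) (A : Set G) : Prop where
  period_eq : {g : G | g +ᵥ A = A} = {0}
  itSum_ne_univ : itSum k A ≠ Set.univ
  itSum_union_eq_univ : ∀ g ∉ A, itSum k (A ∪ {g}) = Set.univ

theorem Nk_eq_sSup_ncard (G : Type*) [AddCommGroup G] (k : ℕ) :
    Nk G k = sSup (Set.ncard '' {A : Set G | IsAperiodicMaximal k A}) := by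
  refine congrArg sSup (Set.ext fun m => ⟨?_, ?_⟩)
  · rintro ⟨A, hper, hne, hmax, rfl⟩
    exact ⟨A, ⟨hper, hne, hmax⟩, rfl⟩
  · rintro ⟨A, ⟨hper, hne, hmax⟩, rfl⟩
    exact ⟨A, hper, hne, hmax, rfl⟩

theorem IsAperiodicMaximal.ncard_le_Nk [Finite G] (hA : IsAperiodicMaximal k A) :
    A.ncard ≤ Nk G k := by
  rw [Nk_eq_sSup_ncard]
  exact le_csSup (Set.toFinite _).bddAbove (Set.mem_image_of_mem _ hA)

theorem IsAperiodicMaximal.image (hA : IsAperiodicMaximal k A) (e : G ≃+ K) :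
    IsAperiodicMaximal k (e '' A) where
  period_eq := by
    have vadd_image (g : K) : g +ᵥ e '' A = e '' (e.symm g +ᵥ A) := by
      simpa using (Set.image_vadd_distrib e (e.symm g) A).symm
    ext g
    simpa [vadd_image, e.injective.image_injective.eq_iff] using
      Set.ext_iff.1 hA.period_eq (e.symm g)
  itSum_ne_univ := by
    rw [itSum_image, ← Set.image_univ_of_surjective e.surjective]
    exact e.injective.image_injective.ne hA.itSum_ne_univ
  itSum_union_eq_univ g hg := by
    have hg' : e.symm g ∉ A := fun h => hg ⟨_, h, e.apply_symm_apply g⟩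
    have himage : e '' A ∪ {g} = e '' (A ∪ {e.symm g}) := by
      rw [Set.image_union, Set.image_singleton, e.apply_symm_apply]
    rw [himage, itSum_image, hA.itSum_union_eq_univ _ hg',
      Set.image_univ_of_surjective e.surjective]

theorem Nk_congr (e : G ≃+ K) (k : ℕ) : Nk G k = Nk K k := by
  rw [Nk_eq_sSup_ncard, Nk_eq_sSup_ncard]
  refine congrArg sSup (Set.Subset.antisymm ?_ ?_)
  · rintro _ ⟨A, hA, rfl⟩
    exact ⟨_, hA.image e, Set.ncard_image_of_injective A e.injective⟩
  · rintro _ ⟨A, hA, rfl⟩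
    exact ⟨_, hA.image e.symm, Set.ncard_image_of_injective A e.symm.injective⟩

theorem exists_superset_isAperiodicMaximal [Finite G] (hk : k ≠ 0) {c : G}
    (hA : itSum k A = {c}ᶜ) : ∃ B, A ⊆ B ∧ IsAperiodicMaximal k B := by
  obtain ⟨B, hAB, hB⟩ := (Set.toFinite {B : Set G | c ∉ itSum k B}).exists_le_maximal
    (a := A) (by simp [hA])
  have hcB : c ∉ itSum k B := hB.prop
  have hcompl : {c}ᶜ ⊆ itSum k B := hA ▸ itSum_mono k hAB
  refine ⟨B, hAB, ?_, fun h => hcB (h ▸ Set.mem_univ c), fun g hg => ?_⟩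
  · refine Set.eq_singleton_iff_unique_mem.2 ⟨zero_vadd G B, fun g hg => ?_⟩
    have hperiod := vadd_itSum_of_vadd_eq hk hg
    by_contra hne
    refine hcB (hperiod ▸ Set.mem_vadd_set.2 ⟨-g + c, hcompl ?_, vadd_neg_vadd g c⟩)
    simpa using hne
  · have hc : c ∈ itSum k (B ∪ {g}) := by
      by_contra hc
      exact hg (hB.le_of_ge hc Set.subset_union_left (by simp))
    have hcompl' := hcompl.trans (itSum_mono k (Set.subset_union_left (t := {g})))
    exact Set.univ_subset_iff.1 (Set.union_compl_self {c} ▸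
      Set.union_subset (Set.singleton_subset_iff.2 hc) hcompl')

theorem ncard_le_Nk_of_itSum_eq_compl_singleton [Finite G] (hk : k ≠ 0) {c : G}
    (hA : itSum k A = {c}ᶜ) : A.ncard ≤ Nk G k := by
  obtain ⟨B, hAB, hB⟩ := exists_superset_isAperiodicMaximal hk hA
  exact (Set.ncard_le_ncard hAB).trans hB.ncard_le_Nk

end Nk

theorem exists_zero_notMem_add_self (H : Type*) [AddCommGroup H] :
    ∃ P : Set H, 0 ∉ P + P ∧ P ∪ -P = {x | x ≠ -x} := by
  obtain ⟨_, _⟩ := exists_wellFoundedLT H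
  refine ⟨{x | x < -x}, ?_, Set.ext fun x => ?_⟩
  · rintro ⟨x, hx, y, hy, hxy⟩
    obtain rfl : y = -x := (neg_eq_of_add_eq_zero_right hxy).symm
    exact lt_asymm hx (by simpa using hy)
  · simp [lt_or_lt_iff_ne]

theorem self_eq_neg_iff_of_odd_card {H : Type*} [AddGroup H] (hodd : Odd (Nat.card H)) {x : H} :
    x = -x ↔ x = 0 := by
  refine ⟨fun h => ?_, fun h => by simp [h]⟩
  apply (nsmulCoprime (Nat.coprime_two_right.2 hodd)).injective
  simpa [two_nsmul] using eq_neg_iff_add_eq_zero.1 h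

theorem exists_zero_notMem_add_self_of_odd_card {H : Type*} [AddCommGroup H]
    (hodd : Odd (Nat.card H)) : ∃ P : Set H, 0 ∉ P + P ∧ 2 * P.ncard + 1 = Nat.card H := by
  have : Finite H := Nat.finite_of_card_ne_zero hodd.pos.ne'
  obtain ⟨P, hP, hunion⟩ := exists_zero_notMem_add_self H
  have hcompl : P ∪ -P = {0}ᶜ := by
    simpa only [ne_eq, self_eq_neg_iff_of_odd_card hodd, Set.compl_singleton_eq] using hunion
  have hdisj : Disjoint P (-P) := Set.disjoint_left.2 fun x hx hx' =>
    hP ⟨x, hx, -x, hx', add_neg_cancel x⟩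
  have hcard := Set.ncard_union_eq hdisj
  rw [hcompl, Set.ncard_neg] at hcard
  have := Set.ncard_add_ncard_compl ({0} : Set H)
  rw [Set.ncard_singleton] at this
  exact ⟨P, hP, by omega⟩

theorem natCast_eq_neg_one_iff {n a : ℕ} (ha : a + 1 < 2 * n) :
    (a : ZMod n) = -1 ↔ a + 1 = n := by
  rw [eq_neg_iff_add_eq_zero, ← Nat.cast_add_one, ZMod.natCast_eq_zero_iff]
  constructor
  · rintro ⟨d, hd⟩
    obtain rfl : d = 1 := by
      have h1 : d < 2 := by nlinarith
      have h0 : d ≠ 0 := by rintro rfl; omega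
      omega
    omega
  · rintro rfl
    exact dvd_rfl

theorem image_intCast_Icc_zero (n : ℕ) :
    Int.cast '' Set.Icc 0 (n : ℤ) = ({-1}ᶜ : Set (ZMod (n + 2))) := by
  ext x
  rw [Set.mem_compl_singleton_iff]
  constructor
  · rintro ⟨z, ⟨hz0, hzn⟩, rfl⟩ hz
    lift z to ℕ using hz0
    rw [Int.cast_natCast, natCast_eq_neg_one_iff (by omega)] at hz
    omega
  · intro hx
    have hlt := x.val_lt
    rw [← ZMod.natCast_zmod_val x, ne_eq, natCast_eq_neg_one_iff (by omega)] at hx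
    exact ⟨x.val, ⟨by omega, by omega⟩, by simp⟩

theorem add_one_le_Nk_zmod {k : ℕ} (hk : k ≠ 0) (m : ℕ) : m + 1 ≤ Nk (ZMod (k * m + 2)) k := by
  have hsum : itSum k ((↑) '' Set.Icc 0 (m : ℤ)) = ({-1}ᶜ : Set (ZMod (k * m + 2))) := by
    rw [← image_intCast_Icc_zero, Nat.cast_mul, ← itSum_Icc_zero k (Int.natCast_nonneg m)]
    exact itSum_image (Int.castAddHom (ZMod (k * m + 2))) k (Set.Icc 0 (m : ℤ))
  have hmn : m < k * m + 2 := by nlinarith [Nat.pos_of_ne_zero hk]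
  have hsub : Set.Icc 0 (m : ℤ) ⊆ Set.Ico 0 ((k * m + 2 : ℕ) : ℤ) :=
    Set.Icc_subset_Ico_right (by exact_mod_cast hmn)
  have hinj := (CharP.intCast_injOn_Ico (ZMod (k * m + 2)) (k * m + 2)).mono hsub
  have hcard : (Set.Icc 0 (m : ℤ)).ncard = m + 1 := by
    simp [← Finset.coe_Icc, Set.ncard_coe_finset]
  rw [← hcard, ← hinj.ncard_image]
  exact ncard_le_Nk_of_itSum_eq_compl_singleton hk hsum

section Fibers

variable {H : Type*} {n : ℕ}

/-- The subset of `ℤ/n × H` whose fibre over the residue class of `i < n` is `L i`; the values `L i`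
with `n ≤ i` are irrelevant. -/
def ofFibers (n : ℕ) (L : ℕ → Set H) : Set (ZMod n × H) :=
  {x | x.2 ∈ L x.1.val}

theorem natCast_mem_ofFibers {L : ℕ → Set H} {i : ℕ} (hi : i < n) {h : H} :
    ((i : ZMod n), h) ∈ ofFibers n L ↔ h ∈ L i := by
  rw [ofFibers, Set.mem_ofPred_eq, ZMod.val_cast_of_lt hi]

theorem ncard_ofFibers [Finite H] [NeZero n] (L : ℕ → Set H) :
    (ofFibers n L).ncard = ∑ i ∈ Finset.range n, (L i).ncard := by
  obtain ⟨n, rfl⟩ := Nat.exists_eq_succ_of_ne_zero (NeZero.ne n)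
  let e : ofFibers (n + 1) L ≃ Σ i : ZMod (n + 1), L i.val :=
    { toFun x := ⟨x.1.1, x.1.2, x.2⟩
      invFun y := ⟨(y.1, y.2.1), y.2.2⟩ }
  rw [← Nat.card_coe_set_eq, Nat.card_congr e, Nat.card_sigma]
  exact Fin.sum_univ_eq_sum_range (fun i => Nat.card (L i)) (n + 1)

theorem mem_itSum_three_ofFibers [AddCommGroup H] [NeZero n] {L : ℕ → Set H} {x : ZMod n × H} :
    x ∈ itSum 3 (ofFibers n L) ↔ ∃ i < n, ∃ j < n, ∃ k < n,
      ((i + j + k : ℕ) : ZMod n) = x.1 ∧ x.2 ∈ L i + L j + L k := by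
  rw [mem_itSum_three]
  constructor
  · rintro ⟨a, ha, b, hb, c, hc, rfl⟩
    exact ⟨_, a.1.val_lt, _, b.1.val_lt, _, c.1.val_lt, by simp,
      Set.add_mem_add (Set.add_mem_add ha hb) hc⟩
  · rintro ⟨i, hi, j, hj, k, hk, hx, y, ⟨a, ha, b, hb, rfl⟩, c, hc, hsum⟩
    exact ⟨(i, a), (natCast_mem_ofFibers hi).2 ha, (j, b), (natCast_mem_ofFibers hj).2 hb,
      (k, c), (natCast_mem_ofFibers hk).2 hc, Prod.ext (by simp [← hx]) hsum⟩

end Fibers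

section Extremal

variable {H : Type*} [AddCommGroup H] {P : Set H} {q i j k t : ℕ}

/-- The fibres of the extremal set: `H` over `0, …, q - 1`, and `H ∖ {0}`, `P`, `{0}` over `q`,
`q + 1`, `q + 2`. In terms of the modulus `3m + 2`, the parameter `q` is `m - 1`. -/
def extremalFiber (q : ℕ) (P : Set H) (i : ℕ) : Set H :=
  if i < q then Set.univ
  else if i = q then {0}ᶜ
  else if i = q + 1 then P
  else if i = q + 2 then {0}
  else ∅

theorem extremalFiber_of_lt (hi : i < q) : extremalFiber q P i = Set.univ := if_pos hi

@[simp]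
theorem extremalFiber_self : extremalFiber q P q = {0}ᶜ := by simp [extremalFiber]

@[simp]
theorem extremalFiber_add_one : extremalFiber q P (q + 1) = P := by simp [extremalFiber]

@[simp]
theorem extremalFiber_add_two : extremalFiber q P (q + 2) = {0} := by simp [extremalFiber]

theorem extremalFiber_of_gt (hi : q + 2 < i) : extremalFiber q P i = ∅ := by
  grind [extremalFiber]

theorem le_of_mem_extremalFiber {h : H} (hh : h ∈ extremalFiber q P i) : i ≤ q + 2 := by
  by_contra! hi
  simp [extremalFiber_of_gt hi] at hh

theorem zero_notMem_add_extremalFiber (hP : 0 ∉ P + P) (h : i + j + k = 3 * q + 4) :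
    0 ∉ extremalFiber q P i + extremalFiber q P j + extremalFiber q P k := by
  rintro ⟨_, ⟨a, ha, b, hb, rfl⟩, c, hc, hsum⟩
  have hP' : ∀ x ∈ P, ∀ y ∈ P, x + y ≠ 0 := fun x hx y hy h => hP ⟨x, hx, y, hy, h⟩
  -- Up to order, `i, j, k` are `q, q + 2, q + 2` or `q + 1, q + 1, q + 2`, so that the sumset is
  -- `{0}ᶜ` or `P + P`.
  simp only [extremalFiber] at ha hb hc
  grind

theorem nonempty_extremalFiber (hP : 0 ∉ P + P) (hne : P.Nonempty) (hi : i ≤ q + 2) :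
    (extremalFiber q P i).Nonempty := by
  obtain hlt | rfl | rfl | rfl : i < q ∨ i = q ∨ i = q + 1 ∨ i = q + 2 := by omega
  · rw [extremalFiber_of_lt hlt]
    exact Set.univ_nonempty
  · rw [extremalFiber_self]
    exact (nontrivial_compl_zero_of_zero_notMem_add_self hP hne).nonempty
  · rwa [extremalFiber_add_one]
  · rw [extremalFiber_add_two]
    exact Set.singleton_nonempty 0

theorem exists_add_extremalFiber_zero_eq_univ (hP : 0 ∉ P + P) (hP₂ : P.Nontrivial) (ht : t ≤ 3) :
    ∃ i ≤ 2, ∃ j ≤ 2, ∃ k ≤ 2, i + j + k = t ∧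
      extremalFiber 0 P i + extremalFiber 0 P j + extremalFiber 0 P k = Set.univ := by
  have h0 : extremalFiber 0 P 0 = {0}ᶜ := extremalFiber_self
  have h1 : extremalFiber 0 P 1 = P := extremalFiber_add_one
  have h2 : extremalFiber 0 P 2 = {0} := extremalFiber_add_two
  have hcompl := nontrivial_compl_zero_of_zero_notMem_add_self hP hP₂.nonempty
  have hCC := compl_zero_add_of_nontrivial hcompl
  interval_cases t
  · exact ⟨0, by simp, 0, by simp, 0, by simp, rfl, by
      rw [h0, hCC, Set.univ_add hcompl.nonempty]⟩
  · exact ⟨0, by simp, 0, by simp, 1, by simp, rfl, by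
      rw [h0, h1, hCC, Set.univ_add hP₂.nonempty]⟩
  · exact ⟨0, by simp, 0, by simp, 2, by simp, rfl, by
      rw [h0, h2, hCC, Set.univ_add (Set.singleton_nonempty 0)]⟩
  · exact ⟨0, by simp, 1, by simp, 2, by simp, rfl, by
      rw [h0, h1, h2, compl_zero_add_of_nontrivial hP₂, Set.univ_add (Set.singleton_nonempty 0)]⟩

theorem exists_add_extremalFiber_eq_univ (hP : 0 ∉ P + P) (hne : P.Nonempty)
    (hq : q = 0 → P.Nontrivial) (ht : t ≤ 3 * q + 3) :
    ∃ i ≤ q + 2, ∃ j ≤ q + 2, ∃ k ≤ q + 2, i + j + k = t ∧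
      extremalFiber q P i + extremalFiber q P j + extremalFiber q P k = Set.univ := by
  rcases Nat.eq_zero_or_pos q with rfl | hpos
  · exact exists_add_extremalFiber_zero_eq_univ hP (hq rfl) ht
  obtain ⟨i, hi, j, hj, k, hk, hsum⟩ :
      ∃ i < q, ∃ j ≤ q + 2, ∃ k ≤ q + 2, i + j + k = t :=
    ⟨t - 2 * (q + 2), by omega, min t (q + 2), by omega,
      min (t - (q + 2)) (q + 2), by omega, by omega⟩
  refine ⟨i, by omega, j, hj, k, hk, hsum, ?_⟩
  rw [extremalFiber_of_lt hi, Set.univ_add (nonempty_extremalFiber hP hne hj),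
    Set.univ_add (nonempty_extremalFiber hP hne hk)]

theorem exists_mem_add_extremalFiber (hP : 0 ∉ P + P) (hne : P.Nonempty)
    (hq : q = 0 → P.Nontrivial) (ht : t ≤ 3 * q + 4) {h : H} (h0 : t = 3 * q + 4 → h ≠ 0) :
    ∃ i ≤ q + 2, ∃ j ≤ q + 2, ∃ k ≤ q + 2, i + j + k = t ∧
      h ∈ extremalFiber q P i + extremalFiber q P j + extremalFiber q P k := by
  rcases Nat.lt_succ_iff_lt_or_eq.1 (Nat.lt_succ_of_le ht) with hlt | rfl
  · obtain ⟨i, hi, j, hj, k, hk, hsum, huniv⟩ :=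
      exists_add_extremalFiber_eq_univ hP hne hq (Nat.le_of_lt_succ hlt)
    exact ⟨i, hi, j, hj, k, hk, hsum, huniv ▸ Set.mem_univ h⟩
  · exact ⟨q, by omega, q + 2, le_rfl, q + 2, le_rfl, by ring, by simpa using h0 rfl⟩

theorem itSum_three_ofFibers_extremalFiber (hP : 0 ∉ P + P) (hne : P.Nonempty)
    (hq : q = 0 → P.Nontrivial) :
    itSum 3 (ofFibers (3 * (q + 1) + 2) (extremalFiber q P)) = {(-1, 0)}ᶜ := by
  ext ⟨y, h⟩
  rw [mem_itSum_three_ofFibers, Set.mem_compl_singleton_iff, ne_eq, Prod.mk.injEq]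
  constructor
  · rintro ⟨i, -, j, -, k, -, hy, hh⟩ ⟨rfl, rfl⟩
    obtain ⟨_, ⟨a, ha, b, hb, rfl⟩, c, hc, -⟩ := id hh
    have hle : i + j + k ≤ 3 * q + 6 := by
      linarith [le_of_mem_extremalFiber ha, le_of_mem_extremalFiber hb,
        le_of_mem_extremalFiber hc]
    have hijk := (natCast_eq_neg_one_iff (by omega)).1 hy
    exact zero_notMem_add_extremalFiber hP (by omega) hh
  · intro hyh
    have hlt := y.val_lt
    have htop : y.val = 3 * q + 4 → h ≠ 0 := by
      rintro hval rfl
      refine hyh ⟨?_, rfl⟩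
      rw [← ZMod.natCast_zmod_val y, natCast_eq_neg_one_iff (by omega)]
      omega
    obtain ⟨i, hi, j, hj, k, hk, hsum, hh⟩ :=
      exists_mem_add_extremalFiber hP hne hq (by omega : y.val ≤ 3 * q + 4) htop
    exact ⟨i, by omega, j, by omega, k, by omega, by rw [hsum, ZMod.natCast_zmod_val], hh⟩

theorem ncard_ofFibers_extremalFiber [Finite H] (q : ℕ) (P : Set H) :
    (ofFibers (3 * (q + 1) + 2) (extremalFiber q P)).ncard = (q + 1) * Nat.card H + P.ncard := by
  have hlow : ∑ i ∈ Finset.range q, (extremalFiber q P i).ncard = q * Nat.card H := by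
    rw [Finset.sum_congr rfl fun i hi => by
      rw [extremalFiber_of_lt (Finset.mem_range.1 hi), Set.ncard_univ]]
    simp
  have hhigh : ∀ i ∈ Finset.range (3 * (q + 1) + 2), i ∉ Finset.range (q + 3) →
      (extremalFiber q P i).ncard = 0 := fun i _ hi => by
    rw [extremalFiber_of_gt (by simpa [Nat.succ_le_iff] using hi), Set.ncard_empty]
  have hcompl := Set.ncard_add_ncard_compl ({0} : Set H)
  rw [Set.ncard_singleton] at hcompl
  rw [ncard_ofFibers, ← Finset.sum_subset (Finset.range_mono (by omega)) hhigh,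
    Finset.sum_range_succ, Finset.sum_range_succ, Finset.sum_range_succ, hlow,
    extremalFiber_self, extremalFiber_add_one, extremalFiber_add_two, Set.ncard_singleton,
    add_one_mul]
  omega

theorem add_ncard_le_Nk_three [Finite H] (hP : 0 ∉ P + P) (hne : P.Nonempty)
    (hq : q = 0 → P.Nontrivial) :
    (q + 1) * Nat.card H + P.ncard ≤ Nk (ZMod (3 * (q + 1) + 2) × H) 3 :=
  ncard_ofFibers_extremalFiber q P ▸ ncard_le_Nk_of_itSum_eq_compl_singleton three_ne_zero
    (itSum_three_ofFibers_extremalFiber hP hne hq)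

end Extremal

theorem itSum_three_zmod_five_prod_zmod_three :
    itSum 3 ({(0, 0), (1, 0), (1, 1), (2, 2)} : Set (ZMod 5 × ZMod 3)) = {(1, 2)}ᶜ := by
  ext x
  rw [mem_itSum_three]
  simp only [Set.mem_insert_iff, Set.mem_singleton_iff, Set.mem_compl_iff]
  revert x
  decide

theorem four_le_Nk_three_zmod_five_prod {H : Type*} [AddCommGroup H] (hH : Nat.card H = 3) :
    4 ≤ Nk (ZMod 5 × H) 3 := by
  have : Fact (Nat.Prime 3) := ⟨Nat.prime_three⟩
  have e := zmodAddCyclicAddEquiv (isAddCyclic_of_prime_card hH)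
  rw [hH] at e
  rw [← Nk_congr ((AddEquiv.refl (ZMod 5)).prodCongr e)]
  refine le_of_eq_of_le ?_ (ncard_le_Nk_of_itSum_eq_compl_singleton three_ne_zero
    itSum_three_zmod_five_prod_zmod_three)
  rw [Set.ncard_eq_toFinset_card']
  rfl

theorem two_mul_add_one_mul_card_le_Nk_three {H : Type*} [AddCommGroup H]
    (hodd : Odd (Nat.card H)) {m : ℕ} (hm : 1 ≤ m) :
    (2 * m + 1) * Nat.card H ≤ 2 * Nk (ZMod (3 * m + 2) × H) 3 + 1 := by
  have : Finite H := Nat.finite_of_card_ne_zero hodd.pos.ne'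
  obtain ⟨q, rfl⟩ := Nat.exists_eq_add_of_le' hm
  obtain ⟨P, hP, hcard⟩ := exists_zero_notMem_add_self_of_odd_card hodd
  rcases P.eq_empty_or_nonempty with rfl | hne
  · have hH : Nat.card H = 1 := by simpa using hcard.symm
    have := (Nat.card_eq_one_iff_unique.1 hH).1
    have : Unique H := uniqueOfSubsingleton 0
    have := add_one_le_Nk_zmod three_ne_zero (q + 1)
    rw [Nk_congr AddEquiv.prodUnique, hH]
    omega
  by_cases hq : q = 0 → P.Nontrivial
  · have := add_ncard_le_Nk_three hP hne hq
    nlinarith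
  · obtain ⟨rfl, hsub⟩ := Classical.not_imp.1 hq
    have hone : P.ncard = 1 := ((Set.not_nontrivial_iff.1 hsub).eq_empty_or_singleton.resolve_left
      hne.ne_empty).elim fun p hp => hp ▸ Set.ncard_singleton p
    have hH : Nat.card H = 3 := by omega
    have : 4 ≤ Nk (ZMod (3 * (0 + 1) + 2) × H) 3 := four_le_Nk_three_zmod_five_prod hH
    omega

theorem nonempty_addEquiv_zmod_prod_of_isCompl {G : Type*} [AddCommGroup G] {G₁ H : AddSubgroup G}
    (hcompl : IsCompl G₁ H) (hcyc : IsAddCyclic G₁) :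
    Nonempty (ZMod (Nat.card G₁) × H ≃+ G) :=
  have hcompl' := (AddSubgroup.toIntSubmodule (M := G)).isCompl_iff.1 hcompl
  ⟨((zmodAddCyclicAddEquiv hcyc).prodCongr (AddEquiv.refl H)).trans
    (Submodule.prodEquivOfIsCompl _ _ hcompl').toAddEquiv⟩

/-- If a finite abelian group `G` decomposes as `G = G₁ ⊕ H` with `G₁` cyclic of order
`3m+2` (`m ≥ 1`) and `|H|` odd, then `N₃(G) ≥ ((2m+1)/(6m+4))·|G| − 1/2`. -/
theorem stmt11 (G : Type*) [AddCommGroup G] [Finite G] (m : ℕ) (hm : 1 ≤ m)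
    (G₁ H : AddSubgroup G) (hcompl : IsCompl G₁ H)
    (hcyc : IsAddCyclic G₁) (hcard : Nat.card G₁ = 3 * m + 2)
    (hodd : Odd (Nat.card H)) :
    (Nk G 3 : ℝ) ≥ (2 * m + 1) / (6 * m + 4) * Nat.card G - 1 / 2 := by
  obtain ⟨e⟩ := nonempty_addEquiv_zmod_prod_of_isCompl hcompl hcyc
  rw [hcard] at e
  have hG : (Nat.card G : ℝ) = (3 * m + 2) * Nat.card H := by
    rw [← Nat.card_congr e.toEquiv, Nat.card_prod, Nat.card_zmod]
    push_cast
    rfl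
  have hN : (2 * m + 1) * (Nat.card H : ℝ) ≤ 2 * Nk G 3 + 1 := by
    exact_mod_cast Nk_congr e 3 ▸ two_mul_add_one_mul_card_le_Nk_three hodd hm
  have hdensity : (2 * m + 1) / (6 * m + 4) * ((3 * m + 2) * (Nat.card H : ℝ)) =
      (2 * m + 1) * Nat.card H / 2 := by
    field_simp
    ring
  rw [hG, hdensity]
  linarith
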